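/- Let k be an algebraically closed field of characteristic p > 0. For every integer s with 1 ≤ s ≤ p−1, there is an isomorphism of representations of C_p over k: L_{p−1} ⊗ L_s ≅ L_{p−s} ⊕ (L_p)^{⊕(s−1)}, i.e., the direct sum of L_{p−s} with s−1 copies of L_p. -/

import Mathlib

/-- The nilpotent single Jordan block of size `s` (ones on the superdiagonal). -/
def jordanN (k : Type) [Field k] (s : ℕ) : Matrix (Fin s) (Fin s) k :=
  Matrix.of fun i j => if (i : ℕ) + 1 = (j : ℕ) then 1 else 0

/-- The generator `σ` of `C_p` acting on `L_s = k^s` as the unipotent Jordan block `1 + N`. -/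
def sigmaL (k : Type) [Field k] (s : ℕ) : (Fin s → k) →ₗ[k] (Fin s → k) :=
  ((1 : Matrix (Fin s) (Fin s) k) + jordanN k s).mulVecLin

/-!
On `V = L_{q-1} ⊗ L_s` with `q = p ^ m`, put `A = N ⊗ 1` and `B = 1 ⊗ N`, so that `T = σ - 1` is
`A + B + A * B` and `T - B = A * (1 + B)` has vanishing `(q - 1)`-st power. In characteristic `p`
this power is `∑ i < q, T ^ i * B ^ (q - 1 - i)`, and since `B ^ s = 0` it equals `T ^ (q - s) * W`
for `W = ∑ i < s, T ^ i * B ^ (s - 1 - i)`. If `v` is the tensor product of the cyclic vectors, then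
`W v` is killed by `T ^ (q - s)`, the vectors `v, B v, …, B ^ (s - 2) v` are killed by `T ^ q`, and
together they generate `V` over `k[T]`. As `(q - s) + (s - 1) * q = dim V`, there are no further
relations.
-/

open Finset Module

section GeomSum

lemma cast_choose_expChar_pow_sub_one (R : Type*) [Ring R] (p m : ℕ) [ExpChar R p] {i : ℕ}
    (hi : i < p ^ m) : ((p ^ m - 1).choose i : R) = (-1) ^ i := by
  induction i with
  | zero => simp
  | succ i ih =>
    have pascal := Nat.choose_eq_choose_pred_add (Nat.zero_lt_of_lt hi) i.succ_pos
    have vanish : ((p ^ m).choose (i + 1) : R) = 0 := by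
      cases ‹ExpChar R p› with
      | zero => simp at hi
      | prime hp => exact (CharP.cast_eq_zero_iff R p _).2 (hp.dvd_choose_pow i.succ_ne_zero hi.ne)
    rw [pascal, Nat.cast_add, Nat.succ_sub_one, ih (by lia)] at vanish
    rw [pow_succ, mul_neg_one, eq_neg_of_add_eq_zero_right vanish]

lemma sub_pow_expChar_pow_sub_one_of_commute {R : Type*} (k : Type*) [CommRing k] [Ring R]
    [Algebra k R] (p m : ℕ) [ExpChar k p] {x y : R} (h : Commute x y) :
    (x - y) ^ (p ^ m - 1) = ∑ i ∈ range (p ^ m), x ^ i * y ^ (p ^ m - 1 - i) := by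
  have hpos : 0 < p ^ m := pow_pos (expChar_pos k p) m
  rw [sub_eq_add_neg, h.neg_right.add_pow, Nat.sub_add_cancel hpos]
  refine sum_congr rfl fun i hi => ?_
  have hi : i < p ^ m := mem_range.1 hi
  have hchoose : ((p ^ m - 1).choose i : R) = (-1) ^ (p ^ m - 1 - i) := by
    rw [← Nat.choose_symm (by lia), ← map_natCast (algebraMap k R),
      cast_choose_expChar_pow_sub_one k p m (by lia), map_pow, map_neg, map_one]
  rw [hchoose, mul_assoc, ← (Commute.neg_one_right _).mul_pow, mul_neg_one, neg_neg]

lemma geom_sum₂_add_of_pow_eq_zero {R : Type*} [Semiring R] {x y : R} {s : ℕ} (hy : y ^ s = 0)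
    (n : ℕ) : ∑ i ∈ range (n + s), x ^ i * y ^ (n + s - 1 - i) =
      x ^ n * ∑ i ∈ range s, x ^ i * y ^ (s - 1 - i) := by
  have low : ∑ i ∈ range n, x ^ i * y ^ (n + s - 1 - i) = 0 := sum_eq_zero fun i hi => by
    rw [pow_eq_zero_of_le (by have := mem_range.1 hi; lia) hy, mul_zero]
  rw [sum_range_add, low, zero_add, mul_sum]
  refine sum_congr rfl fun i _ => ?_
  rw [pow_add, mul_assoc, show n + s - 1 - (n + i) = s - 1 - i by lia]

end GeomSum

section JordanBlock

variable {k : Type} [Field k] {V : Type*} [AddCommGroup V] [Module k V]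

lemma sigmaL_eq_one_add (n : ℕ) : sigmaL k n = 1 + (jordanN k n).mulVecLin := by
  rw [sigmaL, Matrix.mulVecLin_add, Matrix.mulVecLin_one]
  rfl

lemma jordanN_mulVecLin_apply (n : ℕ) (u : Fin n → k) (l : Fin n) :
    (jordanN k n).mulVecLin u l = if h : l + 1 < n then u ⟨l + 1, h⟩ else 0 := by
  simp only [Matrix.mulVecLin_apply, Matrix.mulVec, dotProduct, jordanN, Matrix.of_apply,
    ite_mul, one_mul, zero_mul]
  split_ifs with h
  · have hl (j : Fin n) : (l : ℕ) + 1 = j ↔ ⟨l + 1, h⟩ = j := by rw [Fin.ext_iff]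
    simp only [hl, sum_ite_eq, mem_univ, if_true]
  · exact sum_eq_zero fun j _ => if_neg (by lia)

lemma jordanN_mulVecLin_pow_apply (n i : ℕ) (u : Fin n → k) (l : Fin n) :
    ((jordanN k n).mulVecLin ^ i) u l = if h : l + i < n then u ⟨l + i, h⟩ else 0 := by
  induction i generalizing l with
  | zero => simp
  | succ i ih =>
    rw [pow_succ', End.mul_apply, jordanN_mulVecLin_apply]
    by_cases h : (l : ℕ) + 1 < n
    · simp only [dif_pos h, ih, add_assoc, add_comm 1 i]
    · rw [dif_neg h, dif_neg (by lia)]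

lemma jordanN_mulVecLin_pow_self (n : ℕ) : (jordanN k n).mulVecLin ^ n = 0 := by
  ext
  simp [jordanN_mulVecLin_pow_apply]

/-- The last standard basis vector of `k ^ n`, which generates the Jordan block `L_n`; for `n = 0`
it is the zero vector. -/
def jordanGen (k : Type) [Field k] (n : ℕ) : Fin n → k :=
  fun l => if (l : ℕ) + 1 = n then 1 else 0

lemma jordanN_mulVecLin_pow_rev_jordanGen {n : ℕ} (j : Fin n) :
    ((jordanN k n).mulVecLin ^ (j.rev : ℕ)) (jordanGen k n) = Pi.single j 1 := by
  ext l
  have hl : (l : ℕ) + j.rev + 1 = n ↔ l = j := by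
    rw [Fin.ext_iff, Fin.val_rev]
    lia
  rw [jordanN_mulVecLin_pow_apply, Pi.single_apply]
  simp only [jordanGen, hl]
  split_ifs <;> first | rfl | lia

/-- The linear map `L_n → V` that sends the generator `e` to `x` and `N ^ i e` to `T ^ i x` for
`i < n`, where `N ^ i e` is the basis vector with index `n - 1 - i`. It intertwines `N` and `T` when
`T ^ n x = 0`. -/
noncomputable def jordanBlockMap (T : End k V) (n : ℕ) (x : V) : (Fin n → k) →ₗ[k] V :=
  Fintype.linearCombination k fun i : Fin n => (T ^ (i.rev : ℕ)) x

variable {T : End k V} {n : ℕ} {x : V}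

lemma jordanBlockMap_single (j : Fin n) :
    jordanBlockMap T n x (Pi.single j 1) = (T ^ (j.rev : ℕ)) x := by
  rw [jordanBlockMap, Fintype.linearCombination_apply_single, one_smul]

lemma jordanBlockMap_pow_jordanGen (hx : (T ^ n) x = 0) (i : ℕ) :
    jordanBlockMap T n x (((jordanN k n).mulVecLin ^ i) (jordanGen k n)) = (T ^ i) x := by
  rcases lt_or_ge i n with hi | hi
  · have hrev : ((Fin.rev ⟨i, hi⟩).rev : ℕ) = i := by rw [Fin.rev_rev]
    rw [← hrev, jordanN_mulVecLin_pow_rev_jordanGen, jordanBlockMap_single]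
  · rw [pow_eq_zero_of_le hi (jordanN_mulVecLin_pow_self n), LinearMap.zero_apply, map_zero,
      ← Nat.sub_add_cancel hi, pow_add, End.mul_apply, hx, map_zero]

lemma jordanBlockMap_comp_jordanN (hx : (T ^ n) x = 0) :
    jordanBlockMap T n x ∘ₗ (jordanN k n).mulVecLin = T ∘ₗ jordanBlockMap T n x := by
  refine LinearMap.pi_ext' fun j => LinearMap.ext_ring ?_
  simp only [LinearMap.comp_apply, LinearMap.coe_single]
  rw [← jordanN_mulVecLin_pow_rev_jordanGen, ← End.mul_apply, ← pow_succ',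
    jordanBlockMap_pow_jordanGen hx, jordanBlockMap_pow_jordanGen hx, pow_succ', End.mul_apply]

lemma jordanBlockMap_sigmaL (hx : (T ^ n) x = 0) (u : Fin n → k) :
    jordanBlockMap T n x (sigmaL k n u) = (1 + T) (jordanBlockMap T n x u) := by
  rw [sigmaL_eq_one_add, LinearMap.add_apply, map_add]
  exact congrArg _ (LinearMap.congr_fun (jordanBlockMap_comp_jordanN hx) u)

theorem exists_linearEquiv_pi_sigmaL {ι : Type*} [Fintype ι] {n : ι → ℕ} {x : ι → V}
    (hx : ∀ i, (T ^ n i) (x i) = 0)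
    (hgen : ∀ U ∈ End.invtSubmodule T, (∀ i, x i ∈ U) → U = ⊤)
    (hdim : ∑ i, n i = finrank k V) :
    ∃ e : V ≃ₗ[k] (∀ i, Fin (n i) → k), ∀ y i, e ((1 + T) y) i = sigmaL k (n i) (e y i) := by
  classical
  let f : (∀ i, Fin (n i) → k) →ₗ[k] V :=
    LinearMap.lsum k (fun i => Fin (n i) → k) k fun i => jordanBlockMap T (n i) (x i)
  have f_apply (u) : f u = ∑ i, jordanBlockMap T (n i) (x i) (u i) := by simp [f]
  have f_sigmaL (u) : f (fun i => sigmaL k (n i) (u i)) = (1 + T) (f u) := by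
    simp only [f_apply, jordanBlockMap_sigmaL (hx _), map_sum]
  have f_surjective : Function.Surjective f := by
    refine LinearMap.range_eq_top.1 (hgen _ ?_ fun i => ?_)
    · rintro _ ⟨u, rfl⟩
      refine ⟨(fun i => sigmaL k (n i) (u i)) - u, ?_⟩
      rw [map_sub, f_sigmaL, LinearMap.add_apply, End.one_apply, add_sub_cancel_left]
    · refine ⟨Pi.single i (jordanGen k (n i)), ?_⟩
      rw [LinearMap.lsum_piSingle]
      exact jordanBlockMap_pow_jordanGen (hx i) 0
  have := Module.Finite.of_surjective f f_surjective
  have finrank_eq : finrank k (∀ i, Fin (n i) → k) = finrank k V := by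
    simpa [finrank_pi_fintype] using hdim
  have f_injective : Function.Injective f :=
    (LinearMap.injective_iff_surjective_of_finrank_eq_finrank finrank_eq).2 f_surjective
  let e := LinearEquiv.ofBijective f ⟨f_injective, f_surjective⟩
  have e_symm (y) : e.symm ((1 + T) y) = fun i => sigmaL k (n i) (e.symm y i) := by
    rw [LinearEquiv.symm_apply_eq]
    exact ((f_sigmaL _).trans (congrArg _ (e.apply_symm_apply y))).symm
  exact ⟨e.symm, fun y => congrFun (e_symm y)⟩

end JordanBlock

section CommutingNilpotents

lemma commute_one_add_mul_one_add_sub_one {R : Type*} [Ring R] {A B : R} (hAB : Commute A B) :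
    Commute ((1 + A) * (1 + B) - 1) B :=
  (((Commute.one_left B).add_left hAB).mul_left
    ((Commute.one_left B).add_left (Commute.refl B))).sub_left (Commute.one_left B)

lemma geom_sum₂_one_add_mul_one_add_sub_one_eq_zero {R : Type*} (k : Type*) [CommRing k]
    [Ring R] [Algebra k R] (p m : ℕ) [ExpChar k p] {A B : R} (hAB : Commute A B)
    (hA : A ^ (p ^ m - 1) = 0) :
    ∑ i ∈ range (p ^ m), ((1 + A) * (1 + B) - 1) ^ i * B ^ (p ^ m - 1 - i) = 0 := by
  have hA' : Commute A (1 + B) := (Commute.one_right A).add_right hAB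
  have hsub : (1 + A) * (1 + B) - 1 - B = A * (1 + B) := by noncomm_ring
  rw [← sub_pow_expChar_pow_sub_one_of_commute k p m (commute_one_add_mul_one_add_sub_one hAB),
    hsub, hA'.mul_pow, hA, zero_mul]

variable {k : Type*} [CommRing k] {V : Type*} [AddCommGroup V] [Module k V]
  {A B T : End k V} {U : Submodule k V} {v : V} {s : ℕ}

lemma pow_apply_mem_of_geom_sum₂_apply_mem (hU : U ∈ End.invtSubmodule T) (hB : B ^ s = 0)
    (hlow : ∀ j < s - 1, (B ^ j) v ∈ U)
    (hsum : (∑ i ∈ range s, T ^ i * B ^ (s - 1 - i)) v ∈ U) (j : ℕ) : (B ^ j) v ∈ U := by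
  rcases lt_or_ge j (s - 1) with hj | hj
  · exact hlow j hj
  rcases le_or_gt s j with hsj | hsj
  · rw [pow_eq_zero_of_le hsj hB]
    exact U.zero_mem
  obtain rfl : s = j + 1 := by lia
  rw [sum_range_succ', LinearMap.add_apply, LinearMap.sum_apply] at hsum
  have htail : ∑ i ∈ range j, (T ^ (i + 1) * B ^ (j + 1 - 1 - (i + 1))) v ∈ U :=
    U.sum_mem fun i hi => by
      rw [End.mul_apply, End.pow_apply]
      exact Set.MapsTo.iterate hU _ (hlow _ (by have := mem_range.1 hi; lia))
  simpa using (U.add_mem_iff_right htail).1 hsum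

lemma pow_mul_pow_apply_mem (hAB : Commute A B) (hB : B ^ s = 0)
    (hU : U ∈ End.invtSubmodule ((1 + A) * (1 + B) - 1)) (hv : ∀ j, (B ^ j) v ∈ U) (l j : ℕ) :
    (A ^ l * B ^ j) v ∈ U := by
  induction l generalizing j with
  | zero => simpa using hv j
  | succ l ih =>
    induction hd : s - j generalizing j with
    | zero =>
      rw [pow_eq_zero_of_le (Nat.sub_eq_zero_iff_le.1 hd) hB, mul_zero]
      exact U.zero_mem
    | succ d ihd =>
      have hrec : A ^ (l + 1) * B ^ j = ((1 + A) * (1 + B) - 1) * (A ^ l * B ^ j) -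
          A ^ l * B ^ (j + 1) - A ^ (l + 1) * B ^ (j + 1) := by
        have hcomm : B * (A ^ l * B ^ j) = A ^ l * B ^ (j + 1) := by
          rw [← mul_assoc, ← (hAB.pow_left l).eq, mul_assoc, ← pow_succ']
        calc A ^ (l + 1) * B ^ j
          _ = ((1 + A) * (1 + B) - 1) * (A ^ l * B ^ j) - B * (A ^ l * B ^ j) -
              A * (B * (A ^ l * B ^ j)) := by rw [pow_succ']; noncomm_ring
          _ = _ := by rw [hcomm, pow_succ' A, mul_assoc]
      rw [hrec]
      exact U.sub_mem (U.sub_mem (hU (ih j)) (ih (j + 1))) (ihd (j + 1) (by lia))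

lemma eq_top_of_mem_invtSubmodule_one_add_mul_one_add_sub_one (hAB : Commute A B) (hB : B ^ s = 0)
    (hspan : Submodule.span k (Set.range fun ij : ℕ × ℕ => (A ^ ij.1 * B ^ ij.2) v) = ⊤)
    (hU : U ∈ End.invtSubmodule ((1 + A) * (1 + B) - 1)) (hlow : ∀ j < s - 1, (B ^ j) v ∈ U)
    (hsum : (∑ i ∈ range s, ((1 + A) * (1 + B) - 1) ^ i * B ^ (s - 1 - i)) v ∈ U) : U = ⊤ := by
  rw [eq_top_iff, ← hspan, Submodule.span_le]
  rintro _ ⟨⟨i, j⟩, rfl⟩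
  exact pow_mul_pow_apply_mem hAB hB hU (pow_apply_mem_of_geom_sum₂_apply_mem hU hB hlow hsum) i j

end CommutingNilpotents

section Decomposition

theorem exists_linearEquiv_prod_sigmaL_of_commute {k : Type} [Field k] (p m : ℕ) [ExpChar k p]
    {V : Type*} [AddCommGroup V] [Module k V] {s : ℕ} (hs1 : 1 ≤ s) (hs2 : s ≤ p ^ m)
    {A B : End k V} (hAB : Commute A B) (hA : A ^ (p ^ m - 1) = 0) (hB : B ^ s = 0) {v : V}
    (hv : Submodule.span k (Set.range fun ij : ℕ × ℕ => (A ^ ij.1 * B ^ ij.2) v) = ⊤)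
    (hdim : finrank k V = (p ^ m - 1) * s) :
    ∃ e : V ≃ₗ[k] ((Fin (p ^ m - s) → k) × (Fin (s - 1) → Fin (p ^ m) → k)),
      ∀ y, e (((1 + A) * (1 + B)) y) =
        (LinearMap.prodMap (sigmaL k (p ^ m - s))
          (LinearMap.pi fun i : Fin (s - 1) => (sigmaL k (p ^ m)) ∘ₗ LinearMap.proj i)) (e y) := by
  set T := (1 + A) * (1 + B) - 1 with hT
  set W := ∑ i ∈ range s, T ^ i * B ^ (s - 1 - i)
  have hgeom : ∑ i ∈ range (p ^ m), T ^ i * B ^ (p ^ m - 1 - i) = 0 :=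
    geom_sum₂_one_add_mul_one_add_sub_one_eq_zero k p m hAB hA
  have hTW : T ^ (p ^ m - s) * W = 0 := by
    rw [← geom_sum₂_add_of_pow_eq_zero hB, Nat.sub_add_cancel hs2, hgeom]
  have hTq : T ^ p ^ m = 0 := by
    have := (commute_one_add_mul_one_add_sub_one hAB).geom_sum₂_mul (p ^ m)
    rwa [hgeom, zero_mul, pow_eq_zero_of_le hs2 hB, sub_zero, eq_comm] at this
  let n : Option (Fin (s - 1)) → ℕ := fun o => o.elim (p ^ m - s) fun _ => p ^ m
  let x : Option (Fin (s - 1)) → V := fun o => o.elim (W v) fun j => (B ^ (j : ℕ)) v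
  obtain ⟨e, he⟩ : ∃ e : V ≃ₗ[k] (∀ i, Fin (n i) → k),
      ∀ y i, e ((1 + T) y) i = sigmaL k (n i) (e y i) := by
    refine exists_linearEquiv_pi_sigmaL (x := x) ?_ ?_ ?_
    · rintro (_ | j)
      · exact LinearMap.congr_fun hTW v
      · exact LinearMap.congr_fun hTq _
    · intro U hU hx
      exact eq_top_of_mem_invtSubmodule_one_add_mul_one_add_sub_one hAB hB hv hU
        (fun j hj => hx (some ⟨j, hj⟩)) (hx none)
    · rw [Fintype.sum_option, hdim]
      have hcount : p ^ m - s + (s - 1) * p ^ m = (p ^ m - 1) * s := by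
        zify [hs1, hs2, hs1.trans hs2]
        ring
      simpa [n] using hcount
  refine ⟨e ≪≫ₗ LinearEquiv.piOptionEquivProd k, fun y => ?_⟩
  rw [← add_sub_cancel 1 ((1 + A) * (1 + B)), ← hT]
  exact Prod.ext (he y none) (funext fun j => he y (some j))

lemma map_sigmaL_sigmaL (k : Type) [Field k] (a b : ℕ) :
    TensorProduct.map (sigmaL k a) (sigmaL k b) =
      (1 + (jordanN k a).mulVecLin.rTensor (Fin b → k)) *
        (1 + (jordanN k b).mulVecLin.lTensor (Fin a → k)) := by
  rw [← LinearMap.rTensor_comp_lTensor, sigmaL_eq_one_add, sigmaL_eq_one_add,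
    LinearMap.rTensor_add, LinearMap.lTensor_add]
  simp [End.mul_eq_comp, End.one_eq_id]

open scoped TensorProduct in
lemma span_rTensor_pow_mul_lTensor_pow_jordanGen (k : Type) [Field k] (a b : ℕ) :
    Submodule.span k (Set.range fun ij : ℕ × ℕ =>
      ((jordanN k a).mulVecLin.rTensor (Fin b → k) ^ ij.1 *
        (jordanN k b).mulVecLin.lTensor (Fin a → k) ^ ij.2)
          (jordanGen k a ⊗ₜ[k] jordanGen k b)) = ⊤ := by
  rw [eq_top_iff, ← ((Pi.basisFun k (Fin a)).tensorProduct (Pi.basisFun k (Fin b))).span_eq]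
  refine Submodule.span_mono ?_
  rintro _ ⟨⟨i, j⟩, rfl⟩
  refine ⟨(i.rev, j.rev), ?_⟩
  simp only [LinearMap.rTensor_pow, LinearMap.lTensor_pow, End.mul_apply,
    LinearMap.rTensor_tmul, LinearMap.lTensor_tmul, jordanN_mulVecLin_pow_rev_jordanGen,
    Basis.tensorProduct_apply, Pi.basisFun_apply]

end Decomposition

theorem stmt4_general (p m : ℕ) (k : Type) [Field k] [ExpChar k p] (s : ℕ) (hs1 : 1 ≤ s)
    (hs2 : s ≤ p ^ m) :
    ∃ e : TensorProduct k (Fin (p ^ m - 1) → k) (Fin s → k) ≃ₗ[k]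
        ((Fin (p ^ m - s) → k) × (Fin (s - 1) → Fin (p ^ m) → k)),
      ∀ x, e (TensorProduct.map (sigmaL k (p ^ m - 1)) (sigmaL k s) x) =
        (LinearMap.prodMap (sigmaL k (p ^ m - s))
          (LinearMap.pi fun i : Fin (s - 1) => (sigmaL k (p ^ m)) ∘ₗ LinearMap.proj i)) (e x) := by
  rw [map_sigmaL_sigmaL]
  refine exists_linearEquiv_prod_sigmaL_of_commute p m hs1 hs2 ?_ ?_ ?_
    (span_rTensor_pow_mul_lTensor_pow_jordanGen k _ _) (by simp)
  · rw [commute_iff_eq, End.mul_eq_comp, End.mul_eq_comp, LinearMap.rTensor_comp_lTensor,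
      LinearMap.lTensor_comp_rTensor]
  · rw [LinearMap.rTensor_pow, jordanN_mulVecLin_pow_self, LinearMap.rTensor_zero]
  · rw [LinearMap.lTensor_pow, jordanN_mulVecLin_pow_self, LinearMap.lTensor_zero]

/-- Over an algebraically closed field of characteristic `p > 0`,
for every `1 ≤ s ≤ p − 1` there is an isomorphism of representations of `C_p`:
`L_{p−1} ⊗ L_s ≅ L_{p−s} ⊕ (L_p)^{⊕(s−1)}` (the direct sum of `L_{p−s}` with `s − 1`
copies of `L_p`). -/
theorem stmt4 (p : ℕ) (hp : p.Prime) (k : Type) [Field k] [IsAlgClosed k] [CharP k p]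
    (s : ℕ) (hs1 : 1 ≤ s) (hs2 : s ≤ p - 1) :
    ∃ e : TensorProduct k (Fin (p - 1) → k) (Fin s → k) ≃ₗ[k]
        ((Fin (p - s) → k) × (Fin (s - 1) → Fin p → k)),
      ∀ x, e (TensorProduct.map (sigmaL k (p - 1)) (sigmaL k s) x) =
        (LinearMap.prodMap (sigmaL k (p - s))
          (LinearMap.pi fun i : Fin (s - 1) => (sigmaL k p) ∘ₗ LinearMap.proj i)) (e x) := by
  have := ExpChar.prime (R := k) hp
  have h := stmt4_general p 1 k s hs1 (by lia)
  rwa [pow_one] at h
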